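/- arXiv:2209.10036 — 6 statements merged into one kernel-verified Lean document; each statement's English description precedes it below -/
import Mathlib

section
/- Let f : M → X be a continuous map between topological spaces and let A ⊆ X be a subset that is both compact and closed and satisfies A ∩ Bd f = ∅. Then the preimage f⁻¹(A) is a compact subset of M. -/
open Set

/-- The boundary of a map `f : M → X`: the intersection, over all compact subsets
`K ⊆ M`, of the closures in `X` of the images `f(M \ K)`. -/
def mapBd {M X : Type*} [TopologicalSpace M] [TopologicalSpace X] (f : M → X) : Set X :=
  ⋂ (K : Set M) (_ : IsCompact K), closure (f '' Kᶜ)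

/-!
The boundary of `f` is its set of cluster points along the cocompact filter of `M`. A compact set
none of whose points is such a cluster point has a single neighbourhood whose preimage lies in a
compact set, and a closed subset of a compact set is compact.
-/

section

open Filter Topology

variable {M X : Type*} [TopologicalSpace M] [TopologicalSpace X] {f : M → X}

theorem mem_mapBd_iff_mapClusterPt {x : X} :
    x ∈ mapBd f ↔ MapClusterPt x (cocompact M) f := by
  simp only [mapBd, mem_iInter, MapClusterPt,
    (hasBasis_cocompact.map f).clusterPt_iff_forall_mem_closure]

theorem disjoint_nhdsSet_map_cocompact_iff {A : Set X} (hA : IsCompact A) :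
    Disjoint (𝓝ˢ A) (map f (cocompact M)) ↔ Disjoint A (mapBd f) := by
  simp only [hA.disjoint_nhdsSet_left, disjoint_left, mem_mapBd_iff_mapClusterPt, MapClusterPt,
    clusterPt_iff_not_disjoint, not_not]

theorem exists_isCompact_preimage_subset_of_disjoint_mapBd {A : Set X} (hA : IsCompact A)
    (hdisj : Disjoint A (mapBd f)) : ∃ K, IsCompact K ∧ f ⁻¹' A ⊆ K := by
  have hcomap : Disjoint (cocompact M) (comap f (𝓝ˢ A)) :=
    disjoint_comap_iff_map.mpr ((disjoint_nhdsSet_map_cocompact_iff hA).mpr hdisj).symm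
  obtain ⟨K, hKA, hK⟩ := (disjoint_cocompact_left _).mp hcomap
  obtain ⟨U, hU, hUK⟩ := mem_comap.mp hKA
  exact ⟨K, hK, (preimage_mono (subset_of_mem_nhdsSet hU)).trans hUK⟩

end

theorem preimage_compact_of_disjoint_mapBd
    {M X : Type*} [TopologicalSpace M] [TopologicalSpace X]
    (f : M → X) (hf : Continuous f)
    (A : Set X) (hAcomp : IsCompact A) (hAcl : IsClosed A)
    (hdisj : A ∩ mapBd f = ∅) :
    IsCompact (f ⁻¹' A) := by
  obtain ⟨K, hK, hAK⟩ := exists_isCompact_preimage_subset_of_disjoint_mapBd hAcomp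
    (disjoint_iff_inter_eq_empty.mpr hdisj)
  exact hK.of_isClosed_subset (hAcl.preimage hf) hAK
end

section
/- (Lemma 1.5(5)) Let f : M → X be a continuous map between topological spaces. Suppose X is Hausdorff and admits a family (A_i)_{i ∈ I} of compact subsets covering X that is locally finite (every point of X has a neighborhood meeting A_i for only finitely many i ∈ I). Suppose M is Hausdorff, normal, and locally compact (every point of M has a compact neighborhood), and let B ⊆ M be a closed subset such that the restriction f|_B is proper (for every compact A ⊆ X, the set B ∩ f⁻¹(A) is compact). Then there exists an open set W ⊆ M with B ⊆ W such that the restriction of f to closure(W) is still proper: for every compact A ⊆ X, the set closure(W) ∩ f⁻¹(A) is compact. -/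
open Set

/-!
Each `A i` meets only finitely many `A j`. The complement of the union of the members disjoint
from `A i` is an open neighborhood `V i` of `A i`, and the family `V` is again locally finite.
A compact neighborhood of `B ∩ f ⁻¹' A i` can be chosen inside `f ⁻¹' V i`. These neighborhoods
form a locally finite family of closed sets, so they cover the closure of the union `W` of their
interiors, and only finitely many of them meet the preimage of a given compact set.
-/

section

variable {ι M X : Type*} [TopologicalSpace M] [TopologicalSpace X]

theorem exists_isOpen_superset_locallyFinite_of_starFinite {A : ι → Set X}
    (hA_closed : ∀ i, IsClosed (A i)) (hA_cover : ⋃ i, A i = univ) (hA : LocallyFinite A)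
    (hA_star : ∀ i, {j | (A j ∩ A i).Nonempty}.Finite) :
    ∃ V : ι → Set X, (∀ i, IsOpen (V i)) ∧ (∀ i, A i ⊆ V i) ∧ LocallyFinite V := by
  let V (i : ι) : Set X := (⋃ j : {j // Disjoint (A j) (A i)}, A j)ᶜ
  have meets_of_meets_V {i j : ι} (h : (V i ∩ A j).Nonempty) : (A i ∩ A j).Nonempty := by
    obtain ⟨x, hxV, hxA⟩ := h
    refine not_disjoint_iff_nonempty_inter.1 fun hij => hxV ?_
    exact mem_iUnion.2 ⟨⟨j, hij.symm⟩, hxA⟩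
  refine ⟨V, fun i => ?_, fun i => ?_, fun x => ?_⟩
  · have others_closed : IsClosed (⋃ j : {j // Disjoint (A j) (A i)}, A j) :=
      (hA.comp_injective Subtype.val_injective).isClosed_iUnion fun j => hA_closed j
    exact others_closed.isOpen_compl
  · exact subset_compl_iff_disjoint_left.2 (disjoint_iUnion_left.2 fun j => j.2)
  · obtain ⟨U, hU, hU_fin⟩ := hA x
    refine ⟨U, hU, (hU_fin.biUnion fun j _ => hA_star j).subset ?_⟩
    rintro i ⟨y, hyV, hyU⟩
    obtain ⟨j, hyA⟩ := iUnion_eq_univ_iff.1 hA_cover y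
    exact mem_biUnion (show (A j ∩ U).Nonempty from ⟨y, hyA, hyU⟩)
      (meets_of_meets_V ⟨y, hyV, hyA⟩)

theorem exists_isOpen_superset_isCompact_closure_inter [R1Space M] [WeaklyLocallyCompactSpace M]
    {C U : ι → Set M} (hC : ∀ i, IsCompact (C i)) (hU_open : ∀ i, IsOpen (U i))
    (hCU : ∀ i, C i ⊆ U i) (hU : LocallyFinite U) :
    ∃ W : Set M, IsOpen W ∧ ⋃ i, C i ⊆ W ∧
      ∀ T : Set M, IsClosed T → {i | (U i ∩ T).Nonempty}.Finite → IsCompact (closure W ∩ T) := by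
  choose L hL_compact hL_closed hCL hLU using fun i =>
    exists_compact_closed_between (hC i) (hU_open i) (hCU i)
  have closure_subset : closure (⋃ i, interior (L i)) ⊆ ⋃ i, L i :=
    closure_minimal (iUnion_mono fun i => interior_subset)
      ((hU.subset hLU).isClosed_iUnion hL_closed)
  refine ⟨⋃ i, interior (L i), isOpen_iUnion fun i => isOpen_interior, iUnion_mono hCL,
    fun T hT hfin => ?_⟩
  refine (hfin.isCompact_biUnion fun i _ => hL_compact i).of_isClosed_subset
    (isClosed_closure.inter hT) ?_
  rintro x ⟨hxW, hxT⟩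
  obtain ⟨i, hxL⟩ := mem_iUnion.1 (closure_subset hxW)
  exact mem_biUnion (show (U i ∩ T).Nonempty from ⟨x, hLU i hxL, hxT⟩) hxL

theorem proper_extension_neighborhood_general [T2Space X] [R1Space M]
    [WeaklyLocallyCompactSpace M] {A : ι → Set X} (hA_compact : ∀ i, IsCompact (A i))
    (hA_cover : ⋃ i, A i = univ) (hA : LocallyFinite A) {f : M → X} (hf : Continuous f)
    {B : Set M} (hB : ∀ K : Set X, IsCompact K → IsCompact (B ∩ f ⁻¹' K)) :
    ∃ W : Set M, IsOpen W ∧ B ⊆ W ∧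
      ∀ K : Set X, IsCompact K → IsCompact (closure W ∩ f ⁻¹' K) := by
  obtain ⟨V, hV_open, hAV, hV⟩ := exists_isOpen_superset_locallyFinite_of_starFinite
    (fun i => (hA_compact i).isClosed) hA_cover hA
    fun i => hA.finite_nonempty_inter_compact (hA_compact i)
  obtain ⟨W, hW_open, hBW, hW⟩ := exists_isOpen_superset_isCompact_closure_inter
    (fun i => hB (A i) (hA_compact i)) (fun i => (hV_open i).preimage hf)
    (fun i => inter_subset_right.trans (preimage_mono (hAV i))) (hV.preimage_continuous hf)
  refine ⟨W, hW_open, ?_, fun K hK => hW _ (hK.isClosed.preimage hf) ?_⟩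
  · rwa [← inter_iUnion, ← preimage_iUnion, hA_cover, preimage_univ, inter_univ] at hBW
  · refine (hV.finite_nonempty_inter_compact hK).subset fun i => ?_
    rintro ⟨x, hxV, hxK⟩
    exact ⟨f x, hxV, hxK⟩

end

theorem proper_extension_neighborhood
    {M X : Type*} [TopologicalSpace M] [TopologicalSpace X]
    [T2Space X] [T2Space M] [NormalSpace M]
    (hlocM : ∀ x : M, ∃ K ∈ nhds x, IsCompact K)
    {I : Type*} (A : I → Set X) (hAcomp : ∀ i, IsCompact (A i))
    (hcover : (⋃ i, A i) = Set.univ) (hlf : LocallyFinite A)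
    (f : M → X) (hf : Continuous f)
    (B : Set M) (hB : IsClosed B)
    (hprop : ∀ K : Set X, IsCompact K → IsCompact (B ∩ f ⁻¹' K)) :
    ∃ W : Set M, IsOpen W ∧ B ⊆ W ∧
      ∀ K : Set X, IsCompact K → IsCompact (closure W ∩ f ⁻¹' K) := by
  have : WeaklyLocallyCompactSpace M :=
    ⟨fun x => let ⟨K, hK_nhds, hK⟩ := hlocM x; ⟨K, hK, hK_nhds⟩⟩
  exact proper_extension_neighborhood_general hAcomp hcover hlf hf hprop
end

section
/- (Lemma 2.3, finiteness part) Let R be a commutative ring, X a topological space, k, p ≥ 0, and let h be a rigid map of degree (k,p) on X. Then for every Borel–Moore k-chain c on X with coefficients in R and every singular p-simplex τ of X, the set {σ : σ is a singular k-simplex of X, c(σ) ≠ 0 and h(σ)(τ) ≠ 0} is finite. -/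
open Set

noncomputable section

/-- The standard `k`-simplex, as a topological space. -/
abbrev Δ (k : ℕ) : Type := ↥(stdSimplex ℝ (Fin (k+1)))

/-- A singular `k`-simplex in `X`: a continuous map from the standard `k`-simplex. -/
abbrev SSimplex (X : Type*) [TopologicalSpace X] (k : ℕ) : Type _ := C(Δ k, X)

/-- A Borel–Moore (locally finite) `k`-chain on `X` with coefficients in `R`:
every point has an open neighborhood met by the images of only finitely many
simplices with nonzero coefficient. -/
def IsBMChain {X : Type*} [TopologicalSpace X] {R : Type*} [CommRing R] (k : ℕ)
    (c : SSimplex X k → R) : Prop :=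
  ∀ x : X, ∃ U : Set X, IsOpen U ∧ x ∈ U ∧
    {σ : SSimplex X k | c σ ≠ 0 ∧ (Set.range ⇑σ ∩ U).Nonempty}.Finite

/-- The support of a `k`-chain: the union of the images of the simplices with
nonzero coefficient. -/
def bmSupp {X : Type*} [TopologicalSpace X] {R : Type*} [CommRing R] (k : ℕ)
    (c : SSimplex X k → R) : Set X :=
  ⋃ (σ : SSimplex X k) (_ : c σ ≠ 0), Set.range ⇑σ

/-- A rigid map of degree `(k,p)` on `X`: each value is a Borel–Moore `p`-chain
supported inside the image of the input simplex. -/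
def IsRigid {X : Type*} [TopologicalSpace X] {R : Type*} [CommRing R] (k p : ℕ)
    (h : SSimplex X k → SSimplex X p → R) : Prop :=
  ∀ σ : SSimplex X k, IsBMChain p (h σ) ∧ bmSupp p (h σ) ⊆ Set.range ⇑σ

theorem range_subset_bmSupp {X : Type*} [TopologicalSpace X] {R : Type*} [CommRing R] {k : ℕ}
    {c : SSimplex X k → R} {σ : SSimplex X k} (hσ : c σ ≠ 0) : range σ ⊆ bmSupp k c :=
  subset_iUnion₂_of_subset σ hσ Subset.rfl

theorem IsBMChain.finite_setOf_mem_range {X : Type*} [TopologicalSpace X] {R : Type*} [CommRing R]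
    {k : ℕ} {c : SSimplex X k → R} (hc : IsBMChain k c) (x : X) :
    {σ : SSimplex X k | c σ ≠ 0 ∧ x ∈ range σ}.Finite := by
  obtain ⟨U, -, hxU, hU⟩ := hc x
  exact hU.subset fun σ ⟨hcσ, hxσ⟩ ↦ ⟨hcσ, x, hxσ, hxU⟩

theorem rigid_apply_finite_support_general
    {X : Type*} [TopologicalSpace X] {R S : Type*} [CommRing R] [CommRing S] {k p : ℕ}
    {h : SSimplex X k → SSimplex X p → S} (hsupp : ∀ σ, bmSupp p (h σ) ⊆ range σ)
    {c : SSimplex X k → R} (hc : IsBMChain k c) (τ : SSimplex X p) :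
    {σ : SSimplex X k | c σ ≠ 0 ∧ h σ τ ≠ 0}.Finite := by
  obtain ⟨x, hxτ⟩ := range_nonempty τ
  have mem_range_of_apply_ne_zero {σ : SSimplex X k} (hστ : h σ τ ≠ 0) : x ∈ range σ :=
    hsupp σ (range_subset_bmSupp hστ hxτ)
  exact (hc.finite_setOf_mem_range x).subset fun σ ⟨hcσ, hστ⟩ ↦
    ⟨hcσ, mem_range_of_apply_ne_zero hστ⟩

theorem rigid_apply_finite_support
    {X : Type*} [TopologicalSpace X] {R : Type*} [CommRing R] (k p : ℕ)
    (h : SSimplex X k → SSimplex X p → R) (hrig : IsRigid k p h)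
    (c : SSimplex X k → R) (hc : IsBMChain k c) (τ : SSimplex X p) :
    {σ : SSimplex X k | c σ ≠ 0 ∧ h σ τ ≠ 0}.Finite :=
  rigid_apply_finite_support_general (fun σ ↦ (hrig σ).2) hc τ

end
end

section
/- (Lemma 2.6, fiber finiteness) Let R be a commutative ring, let f : X → X' be a continuous proper map between topological spaces (f⁻¹(A) is compact for every compact A ⊆ X'), let k ≥ 0, and let c be a Borel–Moore k-chain on X with coefficients in R. Then for every singular k-simplex τ of X', the set {σ | σ is a singular k-simplex of X, c(σ) ≠ 0 and f ∘ σ = τ} is finite. -/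
/-!
A simplex `σ` lying over `τ` maps a point `p` of `Δ k` into the fibre of `f` over `τ p`. This fibre
is compact, and a locally finite family has only finitely many members meeting a compact set.
-/

open Set

noncomputable section

namespace IsBMChain

variable {X R : Type*} [TopologicalSpace X] [CommRing R] {k : ℕ} {c : SSimplex X k → R}

theorem locallyFinite_range (hc : IsBMChain k c) :
    LocallyFinite fun σ : Function.support c ↦ range ⇑σ.1 := by
  intro x
  obtain ⟨U, hU, hxU, hfin⟩ := hc x
  exact ⟨U, hU.mem_nhds hxU,
    (hfin.preimage Subtype.val_injective.injOn).subset fun σ hσ ↦ ⟨σ.2, hσ⟩⟩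

theorem finite_nonempty_range_inter_compact (hc : IsBMChain k c) {K : Set X} (hK : IsCompact K) :
    {σ : SSimplex X k | c σ ≠ 0 ∧ (range ⇑σ ∩ K).Nonempty}.Finite :=
  ((hc.locallyFinite_range.finite_nonempty_inter_compact hK).image Subtype.val).subset
    fun σ ⟨hσ, hσK⟩ ↦ ⟨⟨σ, hσ⟩, hσK, rfl⟩

end IsBMChain

theorem proper_pushforward_fiber_finite_general
    {X X' R : Type*} [TopologicalSpace X] [CommRing R] (f : X → X')
    {k : ℕ} {c : SSimplex X k → R} (hc : IsBMChain k c) (τ : Δ k → X')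
    (p : Δ k) (hp : IsCompact (f ⁻¹' {τ p})) :
    {σ : SSimplex X k | c σ ≠ 0 ∧ f ∘ ⇑σ = τ}.Finite :=
  (hc.finite_nonempty_range_inter_compact hp).subset
    fun σ ⟨hσ, hστ⟩ ↦ ⟨hσ, σ p, mem_range_self p, congrFun hστ p⟩

theorem proper_pushforward_fiber_finite
    {X X' : Type*} [TopologicalSpace X] [TopologicalSpace X'] {R : Type*} [CommRing R]
    (f : X → X') (hf : Continuous f)
    (hprop : ∀ A : Set X', IsCompact A → IsCompact (f ⁻¹' A))
    (k : ℕ) (c : SSimplex X k → R) (hc : IsBMChain k c) (τ : SSimplex X' k) :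
    {σ : SSimplex X k | c σ ≠ 0 ∧ f ∘ ⇑σ = ⇑τ}.Finite :=
  proper_pushforward_fiber_finite_general f hc τ (Classical.arbitrary (Δ k))
    (hprop _ isCompact_singleton)

end
end

section
/- (Lemma 2.6, pushforward) Let R be a commutative ring, let f : X → X' be a continuous proper map between topological spaces (f⁻¹(A) is compact for every compact A ⊆ X'), and suppose every point of X' has an open neighborhood whose closure in X' is compact. Let k ≥ 0 and let c be a Borel–Moore k-chain on X with coefficients in R. Then the function f_#(c), sending each singular k-simplex τ of X' to ∑_σ c(σ) summed over the (finitely many) singular k-simplices σ of X with c(σ) ≠ 0 and f ∘ σ = τ, is a Borel–Moore k-chain on X' with coefficients in R; moreover, for every τ with f_#(c)(τ) ≠ 0 one has range(τ) ⊆ f(supp(c)). -/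
/-! A chain is Borel–Moore when the images of its simplices form a locally finite family, and every
simplex `τ` occurring in `f_#(c)` is `f ∘ σ` for some simplex `σ` occurring in `c`. So it is enough
that `f` carries locally finite families to locally finite families. This holds as soon as the
preimages of neighborhoods of each point `y` shrink towards a compact set `K`, because a locally
finite family meets some neighborhood of `K` only finitely often. One takes `K = f ⁻¹' closure U`
for `U` as in the theorem; for a closed map with compact fibers, `K = f ⁻¹' {y}` would serve. -/

open Set

noncomputable section

attribute [local instance] Classical.propDecidable

section LocallyFiniteFamilies

open Filter Topology

variable {X Y ι : Type*} [TopologicalSpace X] [TopologicalSpace Y]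

theorem exists_mem_nhdsSet_finite_inter_nonempty {s : ι → Set X} (hs : LocallyFinite s)
    {K : Set X} (hK : IsCompact K) : ∃ W ∈ 𝓝ˢ K, {i | (s i ∩ W).Nonempty}.Finite := by
  choose U hU hfin using hs
  obtain ⟨t, -, ht⟩ := hK.elim_nhds_subcover_nhdsSet fun x _ => hU x
  refine ⟨⋃ x ∈ t, U x, ht, (t.finite_toSet.biUnion fun x _ => hfin x).subset ?_⟩
  rintro i ⟨p, hpi, hpU⟩
  obtain ⟨x, hxt, hpx⟩ := mem_iUnion₂.mp hpU
  exact mem_biUnion hxt ⟨p, hpi, hpx⟩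

theorem locallyFinite_image_of_comap_nhds_le_nhdsSet {f : X → Y}
    (hf : ∀ y, ∃ K, IsCompact K ∧ comap f (𝓝 y) ≤ 𝓝ˢ K) {s : ι → Set X} (hs : LocallyFinite s) :
    LocallyFinite fun i => f '' s i := by
  intro y
  obtain ⟨K, hK, hle⟩ := hf y
  obtain ⟨W, hW, hfin⟩ := exists_mem_nhdsSet_finite_inter_nonempty hs hK
  obtain ⟨V, hV, hVW⟩ := mem_comap.mp (hle hW)
  refine ⟨V, hV, hfin.subset ?_⟩
  rintro i ⟨_, ⟨x, hx, rfl⟩, hxV⟩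
  exact ⟨x, hx, hVW hxV⟩

theorem exists_isCompact_comap_nhds_le_nhdsSet [WeaklyLocallyCompactSpace Y] {f : X → Y}
    (hf : ∀ A, IsCompact A → IsCompact (f ⁻¹' A)) (y : Y) :
    ∃ K, IsCompact K ∧ comap f (𝓝 y) ≤ 𝓝ˢ K := by
  obtain ⟨A, hA, hAy⟩ := exists_compact_mem_nhds y
  exact ⟨f ⁻¹' A, hf A hA,
    (le_principal_iff.mpr (preimage_mem_comap hAy)).trans principal_le_nhdsSet⟩

end LocallyFiniteFamilies

section Pushforward

open Filter Function Topology

variable {X X' R : Type*} [TopologicalSpace X] [TopologicalSpace X'] [CommRing R] {k : ℕ}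
  {f : X → X'} {c : SSimplex X k → R} {τ : SSimplex X' k}

theorem isBMChain_iff_locallyFinite :
    IsBMChain k c ↔ LocallyFinite fun σ : support c => range σ.1 := by
  have finite_iff (U : Set X) : {σ : SSimplex X k | c σ ≠ 0 ∧ (range σ ∩ U).Nonempty}.Finite ↔
      {σ : support c | (range σ.1 ∩ U).Nonempty}.Finite := by
    rw [← finite_image_iff Subtype.val_injective.injOn]
    congr! 1
    ext σ
    simp [and_comm]
  simp only [IsBMChain, LocallyFinite, finite_iff]
  refine forall_congr' fun x => ⟨?_, ?_⟩
  · rintro ⟨U, hU, hxU, hfin⟩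
    exact ⟨U, hU.mem_nhds hxU, hfin⟩
  · rintro ⟨V, hV, hfin⟩
    obtain ⟨U, hUV, hU, hxU⟩ := mem_nhds_iff.mp hV
    exact ⟨U, hU, hxU, hfin.subset fun σ hσ => hσ.mono (inter_subset_inter_right _ hUV)⟩

/-- The pushforward `f_#(c)` of a chain; a simplex `σ` contributes only if `f ∘ σ` is continuous.
Where infinitely many simplices of `c` lie over `τ`, its value is the junk value `0` of `finsum`. -/
def bmPushforward (f : X → X') (c : SSimplex X k → R) (τ : SSimplex X' k) : R :=
  ∑ᶠ σ : SSimplex X k, if f ∘ ⇑σ = ⇑τ then c σ else 0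

theorem exists_comp_eq_of_bmPushforward_ne_zero (hτ : bmPushforward f c τ ≠ 0) :
    ∃ σ : SSimplex X k, f ∘ ⇑σ = ⇑τ ∧ c σ ≠ 0 := by
  by_contra! hc
  exact hτ (finsum_eq_zero_of_forall_eq_zero fun σ => ite_eq_right_iff.mpr (hc σ))

theorem range_subset_image_bmSupp_of_bmPushforward_ne_zero (hτ : bmPushforward f c τ ≠ 0) :
    range τ ⊆ f '' bmSupp k c := by
  obtain ⟨σ, hστ, hσ⟩ := exists_comp_eq_of_bmPushforward_ne_zero hτ
  rw [← hστ, range_comp]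
  exact image_mono (subset_biUnion_of_mem (u := fun σ : SSimplex X k => range σ) hσ)

theorem finite_setOf_ne_zero_and_comp_eq
    (hfc : LocallyFinite fun σ : support c => f '' range σ.1) (τ : SSimplex X' k) :
    {σ : SSimplex X k | c σ ≠ 0 ∧ f ∘ ⇑σ = ⇑τ}.Finite := by
  obtain ⟨p⟩ : Nonempty (Δ k) := inferInstance
  refine ((hfc.point_finite (τ p)).image Subtype.val).subset ?_
  rintro σ ⟨hσ, hστ⟩
  exact ⟨⟨σ, hσ⟩, ⟨σ p, mem_range_self p, congrFun hστ p⟩, rfl⟩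

theorem isBMChain_bmPushforward (hfc : LocallyFinite fun σ : support c => f '' range σ.1) :
    IsBMChain k (bmPushforward f c) := by
  choose lift comp_lift lift_ne_zero using
    fun τ : support (bmPushforward f c) => exists_comp_eq_of_bmPushforward_ne_zero τ.2
  have lift_injective : Injective fun τ => (⟨lift τ, lift_ne_zero τ⟩ : support c) := by
    intro τ₁ τ₂ h
    have h_lift : lift τ₁ = lift τ₂ := congrArg Subtype.val h
    exact Subtype.ext (DFunLike.coe_injective (by rw [← comp_lift, ← comp_lift, h_lift]))
  refine isBMChain_iff_locallyFinite.mpr ((hfc.comp_injective lift_injective).subset fun τ => ?_)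
  rw [← comp_lift, range_comp]
  rfl

theorem proper_pushforward_isBMChain_general
    (hf : ∀ y, ∃ K, IsCompact K ∧ comap f (𝓝 y) ≤ 𝓝ˢ K) (hc : IsBMChain k c) :
    (∀ τ : SSimplex X' k, {σ : SSimplex X k | c σ ≠ 0 ∧ f ∘ ⇑σ = ⇑τ}.Finite) ∧
    IsBMChain k (bmPushforward f c) ∧
    ∀ τ : SSimplex X' k, bmPushforward f c τ ≠ 0 → range τ ⊆ f '' bmSupp k c := by
  have hfc := locallyFinite_image_of_comap_nhds_le_nhdsSet hf (isBMChain_iff_locallyFinite.mp hc)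
  exact ⟨finite_setOf_ne_zero_and_comp_eq hfc, isBMChain_bmPushforward hfc,
    fun _ => range_subset_image_bmSupp_of_bmPushforward_ne_zero⟩

end Pushforward

theorem proper_pushforward_isBMChain
    {X X' : Type*} [TopologicalSpace X] [TopologicalSpace X'] {R : Type*} [CommRing R]
    (f : X → X') (hf : Continuous f)
    (hprop : ∀ A : Set X', IsCompact A → IsCompact (f ⁻¹' A))
    (hloc : ∀ x : X', ∃ U : Set X', IsOpen U ∧ x ∈ U ∧ IsCompact (closure U))
    (k : ℕ) (c : SSimplex X k → R) (hc : IsBMChain k c) :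
    IsBMChain k (fun τ : SSimplex X' k =>
        ∑ᶠ σ : SSimplex X k, if f ∘ ⇑σ = ⇑τ then c σ else 0) ∧
    ∀ τ : SSimplex X' k,
      (∑ᶠ σ : SSimplex X k, if f ∘ ⇑σ = ⇑τ then c σ else 0) ≠ 0 →
      Set.range ⇑τ ⊆ f '' bmSupp k c := by
  have : WeaklyLocallyCompactSpace X' := ⟨fun y =>
    let ⟨U, hU, hyU, hUc⟩ := hloc y
    ⟨closure U, hUc, Filter.mem_of_superset (hU.mem_nhds hyU) subset_closure⟩⟩
  exact (proper_pushforward_isBMChain_general (exists_isCompact_comap_nhds_le_nhdsSet hprop) hc).2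

end
end

section
/- (Lemma 2.1, first map) Let k ≥ 1. There exists a continuous map φ_k : Δ^k → Δ^k such that: (i) φ_k is smooth (C^∞) on Δ^k \ Y, where Y ⊂ Δ^k is the (k−2)-skeleton of Δ^k, i.e. the union of the convex hulls of all subsets of {e_0, e_1, …, e_k} of cardinality at most k−1; (ii) for every p ∈ {0, 1, …, k}, φ_k agrees with the projection π̃^k_p on U^k_p; and (iii) φ_k ∘ τ = τ ∘ φ_k for every permutation τ of {0, 1, …, k} acting on Δ^k. -/
open Set

noncomputable section

/-- The vertices of the standard `k`-simplex in `ℝ^k`: `e_0 = 0` and `e_1, …, e_k`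
the standard basis vectors (here `vtx k q` is `e_q` for `q : Fin (k+1)`). -/
def vtx (k : ℕ) (q : Fin (k+1)) : Fin k → ℝ := fun i => if (i : ℕ) + 1 = (q : ℕ) then 1 else 0

/-- The standard `k`-simplex `Δ^k ⊂ ℝ^k`: the convex hull of `e_0, e_1, …, e_k`. -/
def simplexSet (k : ℕ) : Set (Fin k → ℝ) := convexHull ℝ (Set.range (vtx k))

/-- The `(k-2)`-skeleton of `Δ^k`: the union of the convex hulls of all subsets of
`{e_0, …, e_k}` of cardinality at most `k-1`. -/
def skel (k : ℕ) : Set (Fin k → ℝ) :=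
  ⋃ (A : Finset (Fin (k+1))) (_ : A.card ≤ k - 1), convexHull ℝ (vtx k '' ↑A)

/-- The barycentric coordinates of a point `x` of `Δ^k`:
`t_0 = 1 - ∑ x_i` and `t_q = x_{q-1}` for `q ≥ 1`, so that `x = ∑_q t_q e_q`. -/
def baryCoord (k : ℕ) (x : Fin k → ℝ) (q : Fin (k+1)) : ℝ :=
  Fin.cases (1 - ∑ i, x i) (fun i => x i) q

/-- The barycenter `b_k = (1/(k+1)) ∑_q e_q` of `Δ^k`. -/
def simplexBary (k : ℕ) : Fin k → ℝ := ((k : ℝ) + 1)⁻¹ • ∑ q, vtx k q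

/-- `b'_{k;p} = (1/(k+1)) (b_k + ∑_{q ≠ p} e_q)`. -/
def bary' (k : ℕ) (p : Fin (k+1)) : Fin k → ℝ :=
  ((k : ℝ) + 1)⁻¹ • (simplexBary k + ∑ q ∈ Finset.univ.erase p, vtx k q)

/-- The set `U^k_p ⊆ Δ^k`. -/
def Upk (k : ℕ) (p : Fin (k+1)) : Set (Fin k → ℝ) :=
  { x | ∃ t : Fin (k+1) → ℝ,
      0 ≤ t p ∧ (∀ q, q ≠ p → 0 < t q) ∧ (∑ q, t q) = 1 ∧
      x = t p • bary' k p + ∑ q ∈ Finset.univ.erase p, t q • vtx k q }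

/-- The projection `π̃^k_p : Δ^k \ {e_p} → Δ^k_p`, sending `∑_q t_q e_q` to
`(1/(1-t_p)) ∑_{q ≠ p} t_q e_q`. -/
def projFace (k : ℕ) (p : Fin (k+1)) (x : Fin k → ℝ) : Fin k → ℝ :=
  (1 - baryCoord k x p)⁻¹ • (x - baryCoord k x p • vtx k p)

/-- The action of a permutation `τ` of `{0,…,k}` on `Δ^k`, as the restriction of the
affine map determined by `e_q ↦ e_{τ(q)}`. -/
def permAct (k : ℕ) (τ : Equiv.Perm (Fin (k+1))) (x : Fin k → ℝ) : Fin k → ℝ :=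
  ∑ q, baryCoord k x q • vtx k (τ q)

/-!
In barycentric coordinates `s`, multiply each `s q` by a cutoff that vanishes once every other
coordinate is at least `3 * s q`, then divide by the sum. The largest coordinate is never cut off,
so the sum is positive. On `U^k_p` every other coordinate exceeds `(k + 2) * s p ≥ 3 * s p`, so
exactly the `p`-th coordinate is removed, and the normalisation turns this into the projection from
`e_p`. The cutoffs are functions of `(s r - s q) / (s r + s q)`, hence smooth where at most one
coordinate vanishes, i.e. off the `(k-2)`-skeleton; on the skeleton continuity survives because the
bounded cutoff of `s q` is singular only where the factor `s q` vanishes. Permutation equivariance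
is the symmetry of the formula.
-/

section Update

variable {ι R : Type*} [DecidableEq ι]

lemma update_zero_eq_sub_single [AddGroup R] (s : ι → R) (p : ι) :
    Function.update s p 0 = s - Pi.single p (s p) := by
  ext q
  obtain rfl | hq := eq_or_ne q p <;> simp [*]

lemma sum_update_zero [Fintype ι] [AddCommGroup R] (s : ι → R) (p : ι) :
    ∑ q, Function.update s p 0 q = ∑ q, s q - s p := by
  simp [update_zero_eq_sub_single]

end Update

section Dominance

/-- A smooth comparison of two nonnegative reals: it is `0` when `a ≤ b`, and `1` when
`3 * b ≤ a` and `0 < a`. The argument `2 * ((a - b) / (a + b))` is homogeneous of degree `0` and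
takes the junk value `0` at `a = b = 0`, the only point of the quadrant where smoothness is lost. -/
def dominance (a b : ℝ) : ℝ := Real.smoothTransition (2 * ((a - b) / (a + b)))

variable {a b : ℝ}

lemma dominance_nonneg : 0 ≤ dominance a b := Real.smoothTransition.nonneg _

lemma dominance_le_one : dominance a b ≤ 1 := Real.smoothTransition.le_one _

lemma dominance_eq_zero (ha : 0 ≤ a) (hab : a ≤ b) : dominance a b = 0 := by
  apply Real.smoothTransition.zero_of_nonpos
  have : (a - b) / (a + b) ≤ 0 := div_nonpos_of_nonpos_of_nonneg (by linarith) (by linarith)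
  linarith

lemma dominance_eq_one (ha : 0 < a) (hb : 0 ≤ b) (hab : 3 * b ≤ a) : dominance a b = 1 := by
  apply Real.smoothTransition.one_of_one_le
  have : 1 / 2 ≤ (a - b) / (a + b) := by
    rw [div_le_div_iff₀ (by norm_num) (by linarith)]
    linarith
  linarith

lemma contDiffAt_dominance {E : Type*} [NormedAddCommGroup E] [NormedSpace ℝ E] {n : ℕ∞}
    {f g : E → ℝ} {x : E} (hf : ContDiffAt ℝ n f x) (hg : ContDiffAt ℝ n g x)
    (h : f x + g x ≠ 0) : ContDiffAt ℝ n (fun y ↦ dominance (f y) (g y)) x :=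
  Real.smoothTransition.contDiffAt.comp x (contDiffAt_const.mul ((hf.sub hg).div (hf.add hg) h))

end Dominance

section FacetPush

variable {ι : Type*} [Fintype ι] [DecidableEq ι]

/-- A cutoff in `[0, 1]` detecting whether the `q`-th of the nonnegative weights `s` is far below
all the others: it is `0` when every other weight is positive and at least `3 * s q`, and `1` when
some other weight is at most `s q`. -/
def minCutoff (s : ι → ℝ) (q : ι) : ℝ := 1 - ∏ r ∈ {q}ᶜ, dominance (s r) (s q)

/-- The weights `s` with a clearly smallest one smoothly replaced by `0`. -/
def truncateMin (s : ι → ℝ) (q : ι) : ℝ := minCutoff s q * s q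

/-- The weights `truncateMin s`, normalised to have sum `1`. On the standard simplex this pushes a
neighbourhood of the interior of each facet onto that facet. -/
def facetPush (s : ι → ℝ) : ι → ℝ := (∑ q, truncateMin s q)⁻¹ • truncateMin s

variable {s : ι → ℝ} {p q : ι}

lemma minCutoff_nonneg : 0 ≤ minCutoff s q :=
  sub_nonneg.2 <| Finset.prod_le_one (fun _ _ ↦ dominance_nonneg) fun _ _ ↦ dominance_le_one

lemma minCutoff_le_one : minCutoff s q ≤ 1 :=
  sub_le_self _ <| Finset.prod_nonneg fun _ _ ↦ dominance_nonneg

lemma minCutoff_eq_one (hpq : p ≠ q) (hp : 0 ≤ s p) (h : s p ≤ s q) : minCutoff s q = 1 := by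
  rw [minCutoff, Finset.prod_eq_zero (i := p) (by simpa using hpq) (dominance_eq_zero hp h),
    sub_zero]

lemma minCutoff_eq_zero (hp : 0 ≤ s p) (hpos : ∀ q ≠ p, 0 < s q) (h : ∀ q ≠ p, 3 * s p ≤ s q) :
    minCutoff s p = 0 := by
  rw [minCutoff, Finset.prod_eq_one, sub_self]
  intro q hq
  have hqp : q ≠ p := by simpa using hq
  exact dominance_eq_one (hpos q hqp) hp (h q hqp)

lemma truncateMin_nonneg (hs : 0 ≤ s) : 0 ≤ truncateMin s :=
  fun q ↦ mul_nonneg minCutoff_nonneg (hs q)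

lemma sum_truncateMin_pos [Nontrivial ι] (hs : 0 < s) : 0 < ∑ q, truncateMin s q := by
  obtain ⟨hs0, i, hi⟩ := Pi.lt_def.1 hs
  obtain ⟨m, -, hm⟩ := Finset.exists_max_image Finset.univ s Finset.univ_nonempty
  obtain ⟨p, hpm⟩ := exists_ne m
  have hm_fixed : truncateMin s m = s m := by
    rw [truncateMin, minCutoff_eq_one hpm (hs0 p) (hm p (Finset.mem_univ p)), one_mul]
  refine Finset.sum_pos' (fun q _ ↦ truncateMin_nonneg hs0 q) ⟨m, Finset.mem_univ m, ?_⟩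
  exact hm_fixed ▸ hi.trans_le (hm i (Finset.mem_univ i))

lemma truncateMin_eq_update (hp : 0 ≤ s p) (hpos : ∀ q ≠ p, 0 < s q)
    (h : ∀ q ≠ p, 3 * s p ≤ s q) : truncateMin s = Function.update s p 0 := by
  ext q
  obtain rfl | hqp := eq_or_ne q p
  · simp [truncateMin, minCutoff_eq_zero hp hpos h]
  · have hle : s p ≤ s q := by linarith [h q hqp]
    simp [truncateMin, minCutoff_eq_one hqp.symm hp hle, hqp]

lemma truncateMin_comp_equiv {κ : Type*} [Fintype κ] [DecidableEq κ] (s : ι → ℝ) (e : κ ≃ ι) :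
    truncateMin (s ∘ e) = truncateMin s ∘ e := by
  ext q
  have hprod : ∏ r ∈ {q}ᶜ, dominance (s (e r)) (s (e q)) =
      ∏ r ∈ {e q}ᶜ, dominance (s r) (s (e q)) :=
    Finset.prod_equiv e (by simp) (by simp)
  simp only [truncateMin, minCutoff, Function.comp_apply, hprod]

lemma contDiffAt_minCutoff {n : ℕ∞} (h : ∀ r ≠ q, s r + s q ≠ 0) :
    ContDiffAt ℝ n (fun t ↦ minCutoff t q) s :=
  contDiffAt_const.sub <| contDiffAt_prod fun r hr ↦
    contDiffAt_dominance (contDiffAt_apply ℝ ℝ r s) (contDiffAt_apply ℝ ℝ q s)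
      (h r (by simpa using hr))

lemma contDiffAt_truncateMin {n : ℕ∞} (h : Pairwise fun r q ↦ s r + s q ≠ 0) :
    ContDiffAt ℝ n truncateMin s :=
  contDiffAt_pi.2 fun q ↦
    (contDiffAt_minCutoff fun _ hr ↦ h hr).mul (contDiffAt_apply ℝ ℝ q s)

lemma continuousAt_truncateMin (hs : 0 ≤ s) : ContinuousAt truncateMin s := by
  refine continuousAt_pi.2 fun q ↦ ?_
  have hq_cont : ContinuousAt (fun t : ι → ℝ ↦ t q) s := continuousAt_apply q s
  obtain hq | hq := (hs q).eq_or_lt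
  · have hq_zero : Filter.Tendsto (fun t : ι → ℝ ↦ t q) (nhds s) (nhds 0) := by
      simpa [ContinuousAt, ← hq] using hq_cont
    have hbound (t : ι → ℝ) : |minCutoff t q| ≤ 1 :=
      abs_le.2 ⟨by linarith [minCutoff_nonneg (s := t) (q := q)], minCutoff_le_one⟩
    simpa [ContinuousAt, truncateMin, ← hq] using
      bdd_le_mul_tendsto_zero' 1 (Filter.Eventually.of_forall hbound) hq_zero
  · have hsum (r : ι) (_ : r ≠ q) : s r + s q ≠ 0 := (add_pos_of_nonneg_of_pos (hs r) hq).ne'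
    exact (contDiffAt_minCutoff (n := 0) hsum).continuousAt.mul hq_cont

lemma facetPush_mem_stdSimplex [Nontrivial ι] (hs : 0 < s) : facetPush s ∈ stdSimplex ℝ ι := by
  have hsum := sum_truncateMin_pos hs
  refine ⟨fun q ↦ mul_nonneg (inv_nonneg.2 hsum.le) (truncateMin_nonneg hs.le q), ?_⟩
  simp only [facetPush, Pi.smul_apply, smul_eq_mul, ← Finset.mul_sum]
  exact inv_mul_cancel₀ hsum.ne'

lemma facetPush_eq_smul_update (hp : 0 ≤ s p) (hpos : ∀ q ≠ p, 0 < s q)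
    (h : ∀ q ≠ p, 3 * s p ≤ s q) :
    facetPush s = (∑ q, s q - s p)⁻¹ • Function.update s p 0 := by
  rw [facetPush, truncateMin_eq_update hp hpos h, sum_update_zero]

lemma facetPush_comp_equiv {κ : Type*} [Fintype κ] [DecidableEq κ] (s : ι → ℝ) (e : κ ≃ ι) :
    facetPush (s ∘ e) = facetPush s ∘ e := by
  simp only [facetPush, truncateMin_comp_equiv, Function.comp_apply, Equiv.sum_comp e, Pi.smul_comp]

lemma contDiffAt_facetPush [Nontrivial ι] {n : ℕ∞} (hs : 0 < s)
    (h : Pairwise fun r q ↦ s r + s q ≠ 0) : ContDiffAt ℝ n facetPush s := by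
  have htrunc : ContDiffAt ℝ n truncateMin s := contDiffAt_truncateMin h
  exact ((ContDiffAt.sum fun q _ ↦ contDiffAt_pi.1 htrunc q).inv
    (sum_truncateMin_pos hs).ne').smul htrunc

lemma continuousAt_facetPush [Nontrivial ι] (hs : 0 < s) : ContinuousAt facetPush s := by
  have htrunc : ContinuousAt truncateMin s := continuousAt_truncateMin hs.le
  exact ((tendsto_finsetSum _ fun q _ ↦ continuousAt_pi.1 htrunc q).inv₀
    (sum_truncateMin_pos hs).ne').smul htrunc

end FacetPush

section ConvexHull

lemma pos_of_mem_stdSimplex {𝕜 ι : Type*} [Semiring 𝕜] [PartialOrder 𝕜] [Nontrivial 𝕜]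
    [Fintype ι] {w : ι → 𝕜} (hw : w ∈ stdSimplex 𝕜 ι) : 0 < w := by
  refine lt_of_le_of_ne hw.1 ?_
  rintro rfl
  simpa using hw.2

variable {𝕜 ι E : Type*} [Field 𝕜] [LinearOrder 𝕜] [IsStrictOrderedRing 𝕜] [Fintype ι]
  [AddCommGroup E] [Module 𝕜 E]

lemma convexHull_range_eq_image_stdSimplex (v : ι → E) :
    convexHull 𝕜 (range v) = Fintype.linearCombination 𝕜 v '' stdSimplex 𝕜 ι := by
  classical
  rw [← convexHull_rangle_single_eq_stdSimplex, LinearMap.image_convexHull, ← range_comp]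
  congr 2
  ext i
  simp [Fintype.linearCombination_apply_single]

lemma linearCombination_mem_convexHull_image (v : ι → E) {A : Set ι} {w : ι → 𝕜}
    (hw : w ∈ stdSimplex 𝕜 ι) (hA : ∀ i ∉ A, w i = 0) :
    Fintype.linearCombination 𝕜 v w ∈ convexHull 𝕜 (v '' A) := by
  rw [Fintype.linearCombination_apply, ← finsum_eq_sum_of_fintype]
  refine (convex_convexHull 𝕜 (v '' A)).finsum_mem hw.1
    ((finsum_eq_sum_of_fintype w).trans hw.2) fun i hi ↦ ?_
  exact subset_convexHull 𝕜 _ (mem_image_of_mem v (not_imp_comm.1 (hA i) hi))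

end ConvexHull

section BarycentricCoordinates

variable {k : ℕ}

/-- The linear map `ℝ^{k+1} → ℝ^k` sending `t` to `∑ q, t q • e_q`; on weights of sum `1` it is
inverse to `baryCoord k`. -/
def baryComb (k : ℕ) : (Fin (k + 1) → ℝ) →ₗ[ℝ] (Fin k → ℝ) :=
  Fintype.linearCombination ℝ (vtx k)

lemma baryComb_apply (t : Fin (k + 1) → ℝ) : baryComb k t = ∑ q, t q • vtx k q := rfl

lemma baryComb_single (q : Fin (k + 1)) (c : ℝ) : baryComb k (Pi.single q c) = c • vtx k q :=
  Fintype.linearCombination_apply_single ℝ (vtx k) q c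

lemma vtx_apply (q : Fin (k + 1)) (i : Fin k) : vtx k q i = if i.succ = q then 1 else 0 := by
  simp only [vtx, Fin.ext_iff, Fin.val_succ]

lemma baryComb_apply_apply (t : Fin (k + 1) → ℝ) (i : Fin k) : baryComb k t i = t i.succ := by
  simp [baryComb_apply, vtx_apply]

lemma sum_baryCoord (x : Fin k → ℝ) : ∑ q, baryCoord k x q = 1 := by
  simp [Fin.sum_univ_succ, baryCoord]

lemma baryComb_baryCoord (x : Fin k → ℝ) : baryComb k (baryCoord k x) = x := by
  ext i
  rw [baryComb_apply_apply, baryCoord, Fin.cases_succ]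

lemma baryCoord_baryComb {t : Fin (k + 1) → ℝ} (ht : ∑ q, t q = 1) :
    baryCoord k (baryComb k t) = t := by
  rw [Fin.sum_univ_succ] at ht
  ext q
  cases q using Fin.cases with
  | zero => simp [baryCoord, baryComb_apply_apply, ← ht]
  | succ i => simp [baryCoord, baryComb_apply_apply]

lemma contDiff_baryCoord {n : WithTop ℕ∞} : ContDiff ℝ n (baryCoord k) := by
  refine contDiff_pi.2 fun q ↦ ?_
  cases q using Fin.cases with
  | zero => simp only [baryCoord, Fin.cases_zero]; fun_prop
  | succ i => simp only [baryCoord, Fin.cases_succ]; fun_prop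

lemma contDiff_baryComb {n : WithTop ℕ∞} : ContDiff ℝ n (baryComb k) :=
  (LinearMap.toContinuousLinearMap (baryComb k)).contDiff

lemma simplexSet_eq_image_baryComb :
    simplexSet k = baryComb k '' stdSimplex ℝ (Fin (k + 1)) :=
  convexHull_range_eq_image_stdSimplex (vtx k)

lemma baryCoord_mem_stdSimplex {x : Fin k → ℝ} (hx : x ∈ simplexSet k) :
    baryCoord k x ∈ stdSimplex ℝ (Fin (k + 1)) := by
  rw [simplexSet_eq_image_baryComb] at hx
  obtain ⟨t, ht, rfl⟩ := hx
  rwa [baryCoord_baryComb ht.2]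

lemma mem_skel_of_baryCoord_eq_zero {x : Fin k → ℝ} (hx : x ∈ simplexSet k) {p q : Fin (k + 1)}
    (hpq : p ≠ q) (hp : baryCoord k x p = 0) (hq : baryCoord k x q = 0) : x ∈ skel k := by
  refine mem_iUnion₂.2 ⟨{p, q}ᶜ, ?_, ?_⟩
  · rw [Finset.card_compl, Finset.card_pair hpq, Fintype.card_fin]
    omega
  · have hmem := linearCombination_mem_convexHull_image (vtx k)
      (A := ↑({p, q}ᶜ : Finset (Fin (k + 1)))) (baryCoord_mem_stdSimplex hx) ?_
    · exact baryComb_baryCoord x ▸ hmem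
    · intro r hr
      obtain rfl | rfl : r = p ∨ r = q := by simpa [or_iff_not_imp_right] using hr
      exacts [hp, hq]

lemma pairwise_baryCoord_add_ne_zero {x : Fin k → ℝ} (hx : x ∈ simplexSet k \ skel k) :
    Pairwise fun p q ↦ baryCoord k x p + baryCoord k x q ≠ 0 := by
  intro p q hpq hsum
  have hnonneg := (baryCoord_mem_stdSimplex hx.1).1
  obtain ⟨hp, hq⟩ := (add_eq_zero_iff_of_nonneg (hnonneg p) (hnonneg q)).1 hsum
  exact hx.2 (mem_skel_of_baryCoord_eq_zero hx.1 hpq hp hq)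

lemma projFace_eq_baryComb (p : Fin (k + 1)) (x : Fin k → ℝ) :
    projFace k p x =
      baryComb k ((1 - baryCoord k x p)⁻¹ • Function.update (baryCoord k x) p 0) := by
  rw [update_zero_eq_sub_single, map_smul, map_sub, baryComb_single, baryComb_baryCoord, projFace]

lemma permAct_eq_baryComb (τ : Equiv.Perm (Fin (k + 1))) (x : Fin k → ℝ) :
    permAct k τ x = baryComb k (baryCoord k x ∘ τ.symm) := by
  rw [baryComb_apply, ← Equiv.sum_comp τ, permAct]
  simp

lemma baryCoord_permAct (τ : Equiv.Perm (Fin (k + 1))) (x : Fin k → ℝ) :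
    baryCoord k (permAct k τ x) = baryCoord k x ∘ τ.symm := by
  rw [permAct_eq_baryComb, baryCoord_baryComb]
  exact (Equiv.sum_comp τ.symm (baryCoord k x)).trans (sum_baryCoord x)

lemma simplexBary_eq_baryComb : simplexBary k = baryComb k fun _ ↦ ((k : ℝ) + 1)⁻¹ := by
  rw [simplexBary, baryComb_apply, Finset.smul_sum]

lemma sum_erase_smul_vtx (t : Fin (k + 1) → ℝ) (p : Fin (k + 1)) :
    ∑ q ∈ Finset.univ.erase p, t q • vtx k q = baryComb k (Function.update t p 0) := by
  rw [update_zero_eq_sub_single, map_sub, baryComb_single, baryComb_apply,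
    Finset.sum_erase_eq_sub (Finset.mem_univ p)]

lemma bary'_eq_baryComb (p : Fin (k + 1)) :
    bary' k p = baryComb k (((k : ℝ) + 1)⁻¹ •
      ((fun _ ↦ ((k : ℝ) + 1)⁻¹) + Function.update (fun _ ↦ 1) p 0)) := by
  have hface := sum_erase_smul_vtx (fun _ ↦ 1) p
  simp only [one_smul] at hface
  rw [bary', hface, simplexBary_eq_baryComb, map_smul, map_add]

lemma exists_baryCoord_eq_of_mem_Upk {p : Fin (k + 1)} {x : Fin k → ℝ} (hx : x ∈ Upk k p) :
    ∃ t : Fin (k + 1) → ℝ, 0 ≤ t p ∧ (∀ q ≠ p, 0 < t q) ∧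
      baryCoord k x = t p • ((k : ℝ) + 1)⁻¹ •
        ((fun _ ↦ ((k : ℝ) + 1)⁻¹) + Function.update (fun _ ↦ 1) p 0) + Function.update t p 0 := by
  obtain ⟨t, hp, hpos, hsum, rfl⟩ := hx
  refine ⟨t, hp, hpos, ?_⟩
  rw [sum_erase_smul_vtx, bary'_eq_baryComb, ← map_smul, ← map_add, baryCoord_baryComb]
  simp only [Pi.add_apply, Pi.smul_apply, smul_eq_mul, Finset.sum_add_distrib, ← Finset.mul_sum,
    sum_update_zero, Finset.sum_const, Finset.card_univ, Fintype.card_fin, nsmul_eq_mul, hsum]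
  push_cast
  field_simp
  ring

lemma baryCoord_nonneg_of_mem_Upk {p : Fin (k + 1)} {x : Fin k → ℝ} (hx : x ∈ Upk k p) :
    0 ≤ baryCoord k x p := by
  obtain ⟨t, hp, -, hcoord⟩ := exists_baryCoord_eq_of_mem_Upk hx
  simp only [hcoord, Pi.add_apply, Pi.smul_apply, smul_eq_mul, Function.update_self, add_zero]
  positivity

lemma mul_baryCoord_lt_of_mem_Upk {p : Fin (k + 1)} {x : Fin k → ℝ} (hx : x ∈ Upk k p)
    {q : Fin (k + 1)} (hq : q ≠ p) : ((k : ℝ) + 2) * baryCoord k x p < baryCoord k x q := by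
  obtain ⟨t, -, hpos, hcoord⟩ := exists_baryCoord_eq_of_mem_Upk hx
  have hdiff : baryCoord k x q - ((k : ℝ) + 2) * baryCoord k x p = t q := by
    simp only [hcoord, Pi.add_apply, Pi.smul_apply, smul_eq_mul, Function.update_self,
      Function.update_of_ne hq, add_zero]
    field_simp
    ring
  linarith [hpos q hq]

end BarycentricCoordinates

section FacetMap

variable {k : ℕ}

/-- `facetPush` read in barycentric coordinates, as a self-map of the standard simplex of `ℝ^k`:
the map `φ_k`. -/
def facetMap (k : ℕ) (x : Fin k → ℝ) : Fin k → ℝ := baryComb k (facetPush (baryCoord k x))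

lemma facetMap_eq_projFace (hk : 1 ≤ k) {p : Fin (k + 1)} {x : Fin k → ℝ} (hx : x ∈ Upk k p) :
    facetMap k x = projFace k p x := by
  have hp := baryCoord_nonneg_of_mem_Upk hx
  have hk' : (1 : ℝ) ≤ k := by exact_mod_cast hk
  have hpos (q) (hq : q ≠ p) : 0 < baryCoord k x q := by
    nlinarith [mul_baryCoord_lt_of_mem_Upk hx hq]
  have hfar (q) (hq : q ≠ p) : 3 * baryCoord k x p ≤ baryCoord k x q := by
    nlinarith [mul_baryCoord_lt_of_mem_Upk hx hq]
  rw [facetMap, facetPush_eq_smul_update hp hpos hfar, sum_baryCoord, projFace_eq_baryComb]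

variable [Nontrivial (Fin (k + 1))] {x : Fin k → ℝ}

lemma facetPush_baryCoord_mem_stdSimplex (hx : x ∈ simplexSet k) :
    facetPush (baryCoord k x) ∈ stdSimplex ℝ (Fin (k + 1)) :=
  facetPush_mem_stdSimplex (pos_of_mem_stdSimplex (baryCoord_mem_stdSimplex hx))

lemma mapsTo_facetMap : MapsTo (facetMap k) (simplexSet k) (simplexSet k) := fun _ hx ↦
  simplexSet_eq_image_baryComb ▸ mem_image_of_mem _ (facetPush_baryCoord_mem_stdSimplex hx)

lemma continuousAt_facetMap (hx : x ∈ simplexSet k) : ContinuousAt (facetMap k) x :=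
  have hpush := continuousAt_facetPush (pos_of_mem_stdSimplex (baryCoord_mem_stdSimplex hx))
  (contDiff_baryComb (n := 0)).continuous.continuousAt.comp
    (hpush.comp (contDiff_baryCoord (n := 0)).continuous.continuousAt)

lemma contDiffAt_facetMap {n : ℕ∞} (hx : x ∈ simplexSet k \ skel k) :
    ContDiffAt ℝ n (facetMap k) x :=
  have hpush : ContDiffAt ℝ n facetPush (baryCoord k x) := contDiffAt_facetPush
    (pos_of_mem_stdSimplex (baryCoord_mem_stdSimplex hx.1)) (pairwise_baryCoord_add_ne_zero hx)
  contDiff_baryComb.contDiffAt.comp x (hpush.comp x contDiff_baryCoord.contDiffAt)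

lemma facetMap_permAct (τ : Equiv.Perm (Fin (k + 1))) (hx : x ∈ simplexSet k) :
    facetMap k (permAct k τ x) = permAct k τ (facetMap k x) := by
  have hcoord : baryCoord k (facetMap k x) = facetPush (baryCoord k x) :=
    baryCoord_baryComb (facetPush_baryCoord_mem_stdSimplex hx).2
  rw [facetMap, baryCoord_permAct, facetPush_comp_equiv, permAct_eq_baryComb, hcoord]

end FacetMap

theorem exists_phi
    (k : ℕ) (hk : 1 ≤ k) :
    ∃ φ : (Fin k → ℝ) → (Fin k → ℝ),
      ContinuousOn φ (simplexSet k) ∧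
      Set.MapsTo φ (simplexSet k) (simplexSet k) ∧
      (∀ x ∈ simplexSet k \ skel k, ContDiffWithinAt ℝ (⊤ : ℕ∞) φ (simplexSet k) x) ∧
      (∀ (p : Fin (k+1)) (x : Fin k → ℝ), x ∈ Upk k p → φ x = projFace k p x) ∧
      (∀ (τ : Equiv.Perm (Fin (k+1))) (x : Fin k → ℝ), x ∈ simplexSet k →
        φ (permAct k τ x) = permAct k τ (φ x)) := by
  have : Nontrivial (Fin (k+1)) := Fin.nontrivial_iff_two_le.2 (by omega)
  exact ⟨facetMap k, fun x hx ↦ (continuousAt_facetMap hx).continuousWithinAt, mapsTo_facetMap,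
    fun x hx ↦ (contDiffAt_facetMap hx).contDiffWithinAt,
    fun p x hx ↦ facetMap_eq_projFace hk hx, fun τ x hx ↦ facetMap_permAct τ hx⟩

end
end
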